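/- Let (A, d) be a cochain complex of abelian groups indexed by the natural numbers, with differentials d^i : A^i → A^{i+1}, let (A_t, d_t) be its torsion subcomplex and (A_f, d_f) the quotient complex, and let π : A → A_f be the degreewise quotient map of complexes. Fix i, and suppose H^{i+1}(A_t, d_t) = 0. Then the homomorphism π' : H^i(A)_f → H^i(A_f)_f induced on torsion-free quotients of cohomology by π* : H^i(A) → H^i(A_f) is an isomorphism. -/

import Mathlib

/-!
The induced map `π*` on `H^i` is surjective, because the obstruction to lifting a cocycle of `A_f`
to a cocycle of `A` is a class in `H^{i+1}(A_t) = 0` (`cohomologyMap_pi_surjective`). The kernel of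
`π*` is torsion, because a cocycle that becomes a coboundary modulo torsion has a nonzero multiple
that is a coboundary (`exists_smul_eq_zero_of_cohomologyMap_pi`); this needs no vanishing
hypothesis. A surjection with torsion kernel induces an isomorphism on torsion-free quotients.
-/

open Submodule

/-- The cocycles of a cochain complex of abelian groups in degree `i`. -/
abbrev cocycles {A : ℕ → Type} [∀ i, AddCommGroup (A i)]
    (d : ∀ i, A i →ₗ[ℤ] A (i + 1)) (i : ℕ) : Submodule ℤ (A i) :=
  LinearMap.ker (d i)

/-- The coboundaries of a cochain complex of abelian groups in degree `i`
(the trivial subgroup in degree `0`). -/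
def cobounds {A : ℕ → Type} [∀ i, AddCommGroup (A i)]
    (d : ∀ i, A i →ₗ[ℤ] A (i + 1)) : ∀ i, Submodule ℤ (A i)
  | 0 => ⊥
  | (i + 1) => LinearMap.range (d i)

/-- The `i`-th cohomology group of a cochain complex of abelian groups:
cocycles modulo coboundaries. -/
abbrev cohomology {A : ℕ → Type} [∀ i, AddCommGroup (A i)]
    (d : ∀ i, A i →ₗ[ℤ] A (i + 1)) (i : ℕ) : Type :=
  (cocycles d i) ⧸ (Submodule.comap (cocycles d i).subtype (cobounds d i))

/-- A degreewise map of cochain complexes commuting with the differentials sends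
cocycles to cocycles. -/
theorem map_cocycles {A B : ℕ → Type} [∀ i, AddCommGroup (A i)] [∀ i, AddCommGroup (B i)]
    {dA : ∀ i, A i →ₗ[ℤ] A (i + 1)} {dB : ∀ i, B i →ₗ[ℤ] B (i + 1)}
    {f : ∀ i, A i →ₗ[ℤ] B i} (hf : ∀ i, f (i + 1) ∘ₗ dA i = dB i ∘ₗ f i) (i : ℕ) :
    ∀ x ∈ cocycles dA i, f i x ∈ cocycles dB i := by
  intro x hx
  have h := congrArg (fun g => g x) (hf i)
  simp only [LinearMap.comp_apply] at h
  simp only [cocycles, LinearMap.mem_ker] at hx ⊢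
  rw [← h, hx, map_zero]

/-- The map induced on cohomology by a degreewise map of cochain complexes commuting
with the differentials. -/
def cohomologyMap {A B : ℕ → Type} [∀ i, AddCommGroup (A i)] [∀ i, AddCommGroup (B i)]
    (dA : ∀ i, A i →ₗ[ℤ] A (i + 1)) (dB : ∀ i, B i →ₗ[ℤ] B (i + 1))
    (f : ∀ i, A i →ₗ[ℤ] B i) (hf : ∀ i, f (i + 1) ∘ₗ dA i = dB i ∘ₗ f i) (i : ℕ) :
    cohomology dA i →ₗ[ℤ] cohomology dB i :=
  Submodule.mapQ _ _ ((f i).restrict (map_cocycles hf i)) (by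
    intro x hx
    simp only [Submodule.mem_comap, Submodule.subtype_apply,
      LinearMap.restrict_coe_apply] at hx ⊢
    match i with
    | 0 =>
      have hx0 : (x : A 0) = 0 := hx
      simp only [cobounds]
      rw [hx0, map_zero]
      exact Submodule.zero_mem _
    | (j + 1) =>
      obtain ⟨y, hy⟩ := hx
      refine ⟨f j y, ?_⟩
      have h := congrArg (fun g => g y) (hf j)
      simp only [LinearMap.comp_apply] at h
      rw [← h, hy])

/-- The differentials of the torsion-free quotient complex, characterized by
commuting with the degreewise quotient maps. -/
noncomputable def dtf {A : ℕ → Type} [∀ i, AddCommGroup (A i)]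
    (d : ∀ i, A i →ₗ[ℤ] A (i + 1)) (i : ℕ) :
    (A i ⧸ torsion ℤ (A i)) →ₗ[ℤ] (A (i + 1) ⧸ torsion ℤ (A (i + 1))) :=
  Submodule.mapQ _ _ (d i) (by
    intro x hx
    obtain ⟨c, hc⟩ := hx
    refine Submodule.mem_comap.2 ⟨c, ?_⟩
    show (c : ℤ) • (d i) x = 0
    rw [← map_smul]
    have hcx : (c : ℤ) • x = 0 := hc
    rw [hcx, map_zero])

/-- The degreewise quotient maps `π i : A i → A i / T(A i)` commute with the
differentials of the torsion-free quotient complex. -/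
theorem pi_comm {A : ℕ → Type} [∀ i, AddCommGroup (A i)]
    (d : ∀ i, A i →ₗ[ℤ] A (i + 1)) (i : ℕ) :
    (torsion ℤ (A (i + 1))).mkQ ∘ₗ d i = dtf d i ∘ₗ (torsion ℤ (A i)).mkQ := by
  ext x; simp [dtf]

/-- The differentials of a cochain complex preserve torsion. -/
theorem d_torsion {A : ℕ → Type} [∀ i, AddCommGroup (A i)]
    (d : ∀ i, A i →ₗ[ℤ] A (i + 1)) (i : ℕ) :
    ∀ x ∈ torsion ℤ (A i), d i x ∈ torsion ℤ (A (i + 1)) := by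
  intro x hx
  obtain ⟨c, hc⟩ := hx
  refine ⟨c, ?_⟩
  show (c : ℤ) • (d i) x = 0
  rw [← map_smul]
  have hcx : (c : ℤ) • x = 0 := hc
  rw [hcx, map_zero]

/-- The differentials of the torsion subcomplex, given by restricting the
differentials of the original complex. -/
def dt {A : ℕ → Type} [∀ i, AddCommGroup (A i)]
    (d : ∀ i, A i →ₗ[ℤ] A (i + 1)) (i : ℕ) :
    (torsion ℤ (A i)) →ₗ[ℤ] (torsion ℤ (A (i + 1))) :=
  (d i).restrict (d_torsion d i)

/-- A cocycle of `A_f` lifts to some `x` in `A i` with `d x` torsion; as `d x` is a cocycle of `A_t`,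
it equals `d t` for a torsion element `t`, and `x - t` is a cocycle lifting the given one. -/
lemma cohomologyMap_pi_surjective {A : ℕ → Type} [∀ i, AddCommGroup (A i)]
    (d : ∀ i, A i →ₗ[ℤ] A (i + 1)) (hd : ∀ i, d (i + 1) ∘ₗ d i = 0) (i : ℕ)
    (hvanish : Subsingleton (cohomology (dt d) (i + 1))) :
    Function.Surjective (cohomologyMap d (dtf d) (fun j => (torsion ℤ (A j)).mkQ)
      (fun j => (pi_comm d j).symm) i) := by
  intro u
  obtain ⟨⟨z, hz⟩, rfl⟩ := Submodule.mkQ_surjective _ u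
  obtain ⟨x, rfl⟩ := Submodule.mkQ_surjective _ z
  have hx : d i x ∈ torsion ℤ (A (i + 1)) := by
    have h := LinearMap.congr_fun (pi_comm d i) x
    simp only [LinearMap.comp_apply] at h
    rw [LinearMap.mem_ker.1 hz] at h
    exact (Submodule.Quotient.mk_eq_zero _).1 h
  have hdx : (⟨d i x, hx⟩ : torsion ℤ (A (i + 1))) ∈ cocycles (dt d) (i + 1) :=
    LinearMap.mem_ker.2 (Subtype.ext (LinearMap.congr_fun (hd i) x))
  have hb := (Submodule.Quotient.mk_eq_zero _).1 (Subsingleton.elim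
    (Submodule.Quotient.mk ⟨⟨d i x, hx⟩, hdx⟩ : cohomology (dt d) (i + 1)) 0)
  obtain ⟨t, ht⟩ : (⟨d i x, hx⟩ : torsion ℤ (A (i + 1))) ∈ LinearMap.range (dt d i) := hb
  have ht' : d i t = d i x := congrArg Subtype.val ht
  have hc : x - (t : A i) ∈ cocycles d i := by
    rw [LinearMap.mem_ker, map_sub, ht', sub_self]
  refine ⟨Submodule.Quotient.mk ⟨x - t, hc⟩, ?_⟩
  refine congrArg (Submodule.Quotient.mk (p := Submodule.comap (cocycles (dtf d) i).subtype
    (cobounds (dtf d) i))) (Subtype.ext ?_)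
  refine (Submodule.Quotient.eq _).2 ?_
  rw [Submodule.subtype_apply, sub_sub_cancel_left]
  exact neg_mem t.2

/-- If `x` is a coboundary modulo torsion, then multiplying by an integer that kills the torsion
error term turns `x` into a genuine coboundary. -/
lemma exists_smul_mem_cobounds {A : ℕ → Type} [∀ i, AddCommGroup (A i)]
    (d : ∀ i, A i →ₗ[ℤ] A (i + 1)) (i : ℕ) (x : A i)
    (hx : (torsion ℤ (A i)).mkQ x ∈ cobounds (dtf d) i) :
    ∃ c : nonZeroDivisors ℤ, (c : ℤ) • x ∈ cobounds d i := by
  match i with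
  | 0 =>
    obtain ⟨c, hc⟩ := (Submodule.Quotient.mk_eq_zero _).1 ((Submodule.mem_bot ℤ).1 hx)
    exact ⟨c, (Submodule.mem_bot ℤ).2 hc⟩
  | j + 1 =>
    obtain ⟨z, hz⟩ := hx
    obtain ⟨y, rfl⟩ := Submodule.mkQ_surjective _ z
    obtain ⟨c, hc⟩ : d j y - x ∈ torsion ℤ (A (j + 1)) :=
      (Submodule.Quotient.eq _).1 ((LinearMap.congr_fun (pi_comm d j) y).trans hz)
    have hc' : (c : ℤ) • (d j y - x) = 0 := hc
    refine ⟨c, (c : ℤ) • y, ?_⟩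
    rwa [map_smul, ← sub_eq_zero, ← smul_sub]

/-- The kernel of `π*` is torsion. -/
lemma exists_smul_eq_zero_of_cohomologyMap_pi {A : ℕ → Type} [∀ i, AddCommGroup (A i)]
    (d : ∀ i, A i →ₗ[ℤ] A (i + 1)) (i : ℕ) (u : cohomology d i)
    (hu : cohomologyMap d (dtf d) (fun j => (torsion ℤ (A j)).mkQ)
      (fun j => (pi_comm d j).symm) i u = 0) :
    ∃ c : nonZeroDivisors ℤ, (c : ℤ) • u = 0 := by
  obtain ⟨⟨x, hx⟩, rfl⟩ := Submodule.mkQ_surjective _ u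
  obtain ⟨c, hc⟩ := exists_smul_mem_cobounds d i x
    ((Submodule.Quotient.mk_eq_zero ((cobounds (dtf d) i).comap (cocycles (dtf d) i).subtype)).1 hu)
  exact ⟨c, (Submodule.Quotient.mk_eq_zero _).2 hc⟩

/-- Let `(A, d)` be a cochain complex of abelian groups indexed by `ℕ`, let `(A_t, d_t)` be
its torsion subcomplex and `(A_f, d_f)` the quotient complex, and let `π : A → A_f` be
the degreewise quotient map of complexes.  Fix `i` and suppose `H^{i+1}(A_t, d_t) = 0`.
Then the homomorphism `π' : H^i(A)_f → H^i(A_f)_f` induced on torsion-free quotients of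
cohomology by `π* : H^i(A) → H^i(A_f)` is an isomorphism. -/
theorem stmt5 (A : ℕ → Type) [∀ i, AddCommGroup (A i)]
    (d : ∀ i, A i →ₗ[ℤ] A (i + 1)) (hd : ∀ i, d (i + 1) ∘ₗ d i = 0) (i : ℕ)
    (hvanish : Subsingleton (cohomology (dt d) (i + 1)))
    (π' : (cohomology d i ⧸ torsion ℤ (cohomology d i)) →ₗ[ℤ]
      (cohomology (dtf d) i ⧸ torsion ℤ (cohomology (dtf d) i)))
    (hπ' : π' ∘ₗ (torsion ℤ (cohomology d i)).mkQ =
      (torsion ℤ (cohomology (dtf d) i)).mkQ ∘ₗ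
        cohomologyMap d (dtf d) (fun j => (torsion ℤ (A j)).mkQ)
          (fun j => (pi_comm d j).symm) i) :
    Function.Bijective π' := by
  have hπ : ∀ u : cohomology d i, π' ((torsion ℤ (cohomology d i)).mkQ u) =
      (torsion ℤ (cohomology (dtf d) i)).mkQ (cohomologyMap d (dtf d)
        (fun j => (torsion ℤ (A j)).mkQ) (fun j => (pi_comm d j).symm) i u) :=
    LinearMap.congr_fun hπ'
  constructor
  · rw [injective_iff_map_eq_zero]
    intro v hv
    obtain ⟨u, rfl⟩ := Submodule.mkQ_surjective _ v
    rw [hπ] at hv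
    obtain ⟨a, ha⟩ := (Submodule.Quotient.mk_eq_zero _).1 hv
    obtain ⟨c, hc⟩ := exists_smul_eq_zero_of_cohomologyMap_pi d i ((a : ℤ) • u)
      ((map_smul _ _ _).trans ha)
    refine (Submodule.Quotient.mk_eq_zero _).2 ⟨c * a, ?_⟩
    rw [← hc, smul_smul]
    rfl
  · intro w
    obtain ⟨v, rfl⟩ := Submodule.mkQ_surjective _ w
    obtain ⟨u, rfl⟩ := cohomologyMap_pi_surjective d hd i hvanish v
    exact ⟨_, hπ u⟩
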